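/- Fix N ≥ 1, q₀ ∈ ℝ, κ ≥ 0 and α > 0. The minimum of F(u,v) = Σ_{t=1}^N (κ u_t Σ_{j=1}^t (u_j + v_j) + α u_t²) + Σ_{t=1}^N (κ v_t Σ_{j=1}^t (u_j + v_j) + α v_t²) over all (u,v) ∈ ℝ^N × ℝ^N with Σ_{t=1}^N u_t = q₀ and Σ_{t=1}^N v_t = q₀ equals 2κ q₀² + 2(κ + α) q₀²/N, attained at the TWAP pair u = v = c with c_t = q₀/N. -/

import Mathlib

open Finset

/-- The joint expected implementation shortfall of the two agents in the two-player
Almgren–Chriss market impact game (`Σ_{j=1}^t` encoded by the sum over `j ∈ Iic t`). -/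
noncomputable def jointCost (N : ℕ) (κ α : ℝ) (u v : Fin N → ℝ) : ℝ :=
  (∑ t : Fin N, (κ * u t * (∑ j ∈ Iic t, (u j + v j)) + α * (u t) ^ 2)) +
  (∑ t : Fin N, (κ * v t * (∑ j ∈ Iic t, (u j + v j)) + α * (v t) ^ 2))

theorem two_mul_cumsum (N : ℕ) (s : Fin N → ℝ) :
    2 * ∑ t, s t * ∑ j ∈ Iic t, s j = (∑ t, s t) ^ 2 + ∑ t, s t ^ 2 := by
  have h1 : ∑ t, s t * ∑ j ∈ Iic t, s j
      = ∑ t, ∑ j, if j ≤ t then s t * s j else 0 := by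
    refine Finset.sum_congr rfl fun t _ => ?_
    rw [Finset.mul_sum, ← Finset.sum_filter]
    refine Finset.sum_congr ?_ fun _ _ => rfl
    ext j
    simp
  have h2 : ∑ t, ∑ j, (if j ≤ t then s t * s j else 0)
      = ∑ t, ∑ j, if t ≤ j then s t * s j else 0 := by
    rw [Finset.sum_comm]
    refine Finset.sum_congr rfl fun t _ => Finset.sum_congr rfl fun j _ => ?_
    rw [mul_comm]
  have h3 : ∑ t, s t ^ 2 = ∑ t, ∑ j, if t = j then s t * s j else 0 := by
    refine Finset.sum_congr rfl fun t _ => ?_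
    simp [sq]
  rw [two_mul, h1]
  nth_rewrite 2 [h2]
  rw [h3, sq, Finset.sum_mul_sum, ← Finset.sum_add_distrib, ← Finset.sum_add_distrib]
  refine Finset.sum_congr rfl fun t _ => ?_
  rw [← Finset.sum_add_distrib, ← Finset.sum_add_distrib]
  refine Finset.sum_congr rfl fun j _ => ?_
  rcases lt_trichotomy t j with h | h | h
  · simp [h.le, h.not_ge, h.ne]
  · simp [h]
  · simp [h.le, h.not_ge, h.ne']

theorem jointCost_eq (N : ℕ) (κ α : ℝ) (u v : Fin N → ℝ) :
    jointCost N κ α u v = κ / 2 * ((∑ t, u t + ∑ t, v t) ^ 2 + ∑ t, (u t + v t) ^ 2)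
      + α * (∑ t, u t ^ 2 + ∑ t, v t ^ 2) := by
  have h := two_mul_cumsum N (fun t => u t + v t)
  simp only [] at h
  rw [Finset.sum_add_distrib (f := u)] at h
  rw [← h, jointCost, ← Finset.sum_add_distrib, ← Finset.sum_add_distrib, Finset.mul_sum,
    Finset.mul_sum, Finset.mul_sum, ← Finset.sum_add_distrib]
  refine Finset.sum_congr rfl fun t _ => ?_
  ring

theorem sq_div_le_sum_sq (N : ℕ) (hN : 1 ≤ N) (s : Fin N → ℝ) :
    (∑ t, s t) ^ 2 / N ≤ ∑ t, s t ^ 2 := by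
  have hN' : (0 : ℝ) < N := by exact_mod_cast hN
  rw [div_le_iff₀ hN', mul_comm]
  simpa using sq_sum_le_card_mul_sum_sq (s := (Finset.univ : Finset (Fin N))) (f := s)

/-- **Minimum value of the joint cost.** For `N ≥ 1`, `q₀ ∈ ℝ`, `κ ≥ 0`, `α > 0`,
the minimum of `F(u,v)` over all pairs with `Σ u_t = q₀` and `Σ v_t = q₀` equals
`2κq₀² + 2(κ+α)q₀²/N`, and it is attained at the TWAP pair `u = v = c`, `c_t = q₀/N`. -/
theorem jointCost_min_value (N : ℕ) (hN : 1 ≤ N) (q₀ κ α : ℝ)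
    (hκ : 0 ≤ κ) (hα : 0 < α)
    (c : Fin N → ℝ) (hc : ∀ t, c t = q₀ / N) :
    IsLeast {y : ℝ | ∃ u v : Fin N → ℝ,
        (∑ t, u t) = q₀ ∧ (∑ t, v t) = q₀ ∧ y = jointCost N κ α u v}
      (2 * κ * q₀ ^ 2 + 2 * (κ + α) * q₀ ^ 2 / N) ∧
    jointCost N κ α c c = 2 * κ * q₀ ^ 2 + 2 * (κ + α) * q₀ ^ 2 / N := by
  have hN' : (0 : ℝ) < N := by exact_mod_cast hN
  have hsum : ∑ t, c t = q₀ := by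
    simp only [hc, Finset.sum_const, Finset.card_univ, Fintype.card_fin, nsmul_eq_mul]
    field_simp
  have hval : jointCost N κ α c c = 2 * κ * q₀ ^ 2 + 2 * (κ + α) * q₀ ^ 2 / N := by
    rw [jointCost_eq, hsum]
    simp only [hc, Finset.sum_const, Finset.card_univ, Fintype.card_fin, nsmul_eq_mul]
    field_simp
    ring
  refine ⟨⟨⟨c, c, hsum, hsum, hval.symm⟩, ?_⟩, hval⟩
  rintro y ⟨u, v, hu, hv, rfl⟩
  have h1 := sq_div_le_sum_sq N hN u
  have h2 := sq_div_le_sum_sq N hN v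
  have h3 := sq_div_le_sum_sq N hN (fun t => u t + v t)
  rw [Finset.sum_add_distrib, hu, hv] at h3
  rw [hu] at h1
  rw [hv] at h2
  rw [jointCost_eq, hu, hv]
  have e : 2 * κ * q₀ ^ 2 + 2 * (κ + α) * q₀ ^ 2 / N
      = κ / 2 * ((q₀ + q₀) ^ 2 + (q₀ + q₀) ^ 2 / N) + α * (q₀ ^ 2 / N + q₀ ^ 2 / N) := by
    ring
  rw [e]
  gcongr
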